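/- Let A be an n×n complex matrix with Ind(A) = k, let A = Â₁ + Â₂ be an m-core-EP decomposition of A, and let Y be the m-core inverse of Â₁. Then Â₂ Y = 0 and Y Â₂ = 0. -/

import Mathlib

/-!
Writing `B = A₁`, the identity `Y = B Y²` turns `A₂ B = 0` into `A₂ Y = 0`.
For the other product, Minkowski self-adjointness of `B Y` and `B~ A₂ = 0` give
`B Y A₂ = Y~ B~ A₂ = 0`. Substituting `Y = B Y²` yields `B² (Y² A₂) = 0`, and
`rank B² = rank B` means `ker B² = ker B` (`mul_eq_zero_of_rank_sq`), so
`Y A₂ = B Y² A₂ = 0`.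
-/

open Matrix

noncomputable section

/-- The Minkowski metric matrix `G = diag(1, -1, …, -1)`. -/
def mink (n : ℕ) : Matrix (Fin n) (Fin n) ℂ :=
  Matrix.diagonal (fun i => if (i : ℕ) = 0 then 1 else -1)

/-- The Minkowski adjoint `A~ = G A* G`. -/
def madj {n : ℕ} (A : Matrix (Fin n) (Fin n) ℂ) : Matrix (Fin n) (Fin n) ℂ :=
  mink n * Aᴴ * mink n

/-- `k` is the index of `A`: the smallest positive integer with
`rank (A^(k+1)) = rank (A^k)`. -/
def IsInd {n : ℕ} (A : Matrix (Fin n) (Fin n) ℂ) (k : ℕ) : Prop :=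
  0 < k ∧ (A ^ (k + 1)).rank = (A ^ k).rank ∧
    ∀ j, 0 < j → (A ^ (j + 1)).rank = (A ^ j).rank → k ≤ j

/-- `X` is an m-core-EP inverse of `A` (with `Ind(A) = k`). -/
def IsMCoreEP {n : ℕ} (A X : Matrix (Fin n) (Fin n) ℂ) (k : ℕ) : Prop :=
  X * A * X = X ∧ X * A ^ (k + 1) = A ^ k ∧ madj (A * X) = A * X ∧
    ∃ Z : Matrix (Fin n) (Fin n) ℂ, X = A ^ k * Z

/-- `Y` is an m-core inverse of `B`. -/
def IsMCore {n : ℕ} (B Y : Matrix (Fin n) (Fin n) ℂ) : Prop :=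
  B * Y * B = B ∧ B * Y ^ 2 = Y ∧ madj (B * Y) = B * Y

/-- `A = A₁ + A₂` is an m-core-EP decomposition of `A` (with `Ind(A) = k`). -/
def IsMCoreEPDecomp {n : ℕ} (A A₁ A₂ : Matrix (Fin n) (Fin n) ℂ) (k : ℕ) : Prop :=
  A = A₁ + A₂ ∧ (A₁ ^ 2).rank = A₁.rank ∧ (madj A₁ * A₁).rank = A₁.rank ∧
    A₂ ^ k = 0 ∧ madj A₁ * A₂ = 0 ∧ A₂ * A₁ = 0

lemma mink_mul_mink (n : ℕ) : mink n * mink n = 1 := by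
  rw [mink, diagonal_mul_diagonal, ← diagonal_one]
  congr 1
  funext i
  split_ifs <;> norm_num

lemma madj_mul {n : ℕ} (A B : Matrix (Fin n) (Fin n) ℂ) :
    madj (A * B) = madj B * madj A := by
  have h : madj B * madj A = mink n * Bᴴ * (mink n * mink n) * Aᴴ * mink n := by
    simp only [madj, Matrix.mul_assoc]
  rw [h, mink_mul_mink]
  simp only [madj, conjTranspose_mul, Matrix.mul_assoc, Matrix.mul_one]

/-- By rank-nullity, the inclusion `ker B ⊆ ker B²` is an equality as soon as
`B²` and `B` have equal rank; this is applied to the columns of `M`. -/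
lemma mul_eq_zero_of_rank_sq {n : ℕ} {B M : Matrix (Fin n) (Fin n) ℂ}
    (hB : (B ^ 2).rank = B.rank) (h : B ^ 2 * M = 0) : B * M = 0 := by
  have hle : LinearMap.ker B.mulVecLin ≤ LinearMap.ker (B ^ 2).mulVecLin := by
    intro v hv
    simp only [LinearMap.mem_ker, mulVecLin_apply] at hv ⊢
    rw [pow_two, ← mulVec_mulVec, hv, mulVec_zero]
  have hker : LinearMap.ker B.mulVecLin = LinearMap.ker (B ^ 2).mulVecLin := by
    apply Submodule.eq_of_le_of_finrank_eq hle
    have h1 := B.mulVecLin.finrank_range_add_finrank_ker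
    have h2 := (B ^ 2).mulVecLin.finrank_range_add_finrank_ker
    unfold Matrix.rank at hB
    omega
  refine ext_of_mulVec_single fun i => ?_
  have hm : M *ᵥ Pi.single i 1 ∈ LinearMap.ker (B ^ 2).mulVecLin := by
    rw [LinearMap.mem_ker, mulVecLin_apply, mulVec_mulVec, h, zero_mulVec]
  rw [← hker, LinearMap.mem_ker, mulVecLin_apply, mulVec_mulVec] at hm
  rw [hm, zero_mulVec]

/-- For an m-core-EP decomposition `A = Â₁ + Â₂` and the m-core inverse `Y` of
`Â₁`, we have `Â₂ Y = 0` and `Y Â₂ = 0`. -/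
theorem mCoreEPDecomp_mul_mcore_eq_zero {n k : ℕ}
    (A A₁ A₂ Y : Matrix (Fin n) (Fin n) ℂ) (hk : IsInd A k)
    (hdec : IsMCoreEPDecomp A A₁ A₂ k)
    (hY : IsMCore A₁ Y) :
    A₂ * Y = 0 ∧ Y * A₂ = 0 := by
  obtain ⟨-, hrank, -, -, hadj, hmul⟩ := hdec
  obtain ⟨-, hY2, hself⟩ := hY
  refine ⟨by rw [← hY2, ← Matrix.mul_assoc, hmul, Matrix.zero_mul], ?_⟩
  have hBYA : A₁ * Y * A₂ = 0 := by
    rw [← hself, madj_mul, Matrix.mul_assoc, hadj, Matrix.mul_zero]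
  have hsq : A₁ ^ 2 * (Y ^ 2 * A₂) = 0 := by
    calc A₁ ^ 2 * (Y ^ 2 * A₂) = A₁ * (A₁ * Y ^ 2) * A₂ := by
          rw [pow_two A₁]; simp only [Matrix.mul_assoc]
      _ = 0 := by rw [hY2, hBYA]
  rw [← hY2, Matrix.mul_assoc]
  exact mul_eq_zero_of_rank_sq hrank hsq
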